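/- Let k ≥ 1 be an integer, α = (1+√(1+4/k))/2, β = kα+1, a_n = ⌊nα⌋, b_n = ⌊nβ⌋, and S̄_k = {(x,y) ∈ ℕ² : ∃ n ∈ ℕ, {x,y} = {a_n,b_n}}. Then from every position (x,y) ∈ ℕ² with (x,y) ∉ S̄_k there exists a legal move of the ruleset Γ_k to some position in S̄_k. -/

import Mathlib

/-- α = (1 + √(1 + 4/k)) / 2 -/
noncomputable def alphaK (k : ℕ) : ℝ := (1 + Real.sqrt (1 + 4 / (k : ℝ))) / 2

/-- β = k·α + 1 -/
noncomputable def betaK (k : ℕ) : ℝ := (k : ℝ) * alphaK k + 1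

/-- a_n = ⌊n·α⌋ -/
noncomputable def aSeq (k n : ℕ) : ℤ := ⌊(n : ℝ) * alphaK k⌋

/-- b_n = ⌊n·β⌋ -/
noncomputable def bSeq (k n : ℕ) : ℤ := ⌊(n : ℝ) * betaK k⌋

/-- the pair (f^i_n, g^i_n): (f^i_0,g^i_0) = (0,i+1),
    (f^i_n, g^i_n) = (f^i_{n−1} + g^i_{n−1}, k·f^i_{n−1} + (k+1)·g^i_{n−1} + i). -/
def fg (k i : ℕ) : ℕ → ℕ × ℕ
  | 0 => (0, i + 1)
  | n + 1 => ((fg k i n).1 + (fg k i n).2,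
      k * (fg k i n).1 + (k + 1) * (fg k i n).2 + i)

/-- The moves of the ruleset Γ_k, from position `p` to position `q`
    (positions are pairs of natural numbers, so nonnegativity of the
    resulting coordinates is automatic from the additive formulation). -/
def GammaMove (k : ℕ) (p q : ℕ × ℕ) : Prop :=
  -- Type I: Nim moves
  (∃ n : ℕ, 1 ≤ n ∧
      ((q.1 + n = p.1 ∧ q.2 = p.2) ∨ (q.1 = p.1 ∧ q.2 + n = p.2))) ∨
  -- Type II: extended diagonal moves, s,t ≥ 1 with |s−t| < k
  (∃ s t : ℕ, 1 ≤ s ∧ 1 ≤ t ∧ s < t + k ∧ t < s + k ∧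
      ((q.1 + s = p.1 ∧ q.2 + t = p.2) ∨ (q.1 + t = p.1 ∧ q.2 + s = p.2))) ∨
  -- Type III: extra moves (f^i_n, g^i_n − 1) for 1 ≤ i ≤ k−1, n ≥ 1
  (∃ i n : ℕ, 1 ≤ i ∧ i + 1 ≤ k ∧ 1 ≤ n ∧
      ((q.1 + (fg k i n).1 = p.1 ∧ q.2 + ((fg k i n).2 - 1) = p.2) ∨
       (q.1 + ((fg k i n).2 - 1) = p.1 ∧ q.2 + (fg k i n).1 = p.2)))

/-- S̄_k = {(x,y) : ∃ n, {x,y} = {a_n, b_n}} -/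
def SbarK (k : ℕ) : Set (ℕ × ℕ) :=
  {p | ∃ n : ℕ, ((p.1 : ℤ) = aSeq k n ∧ (p.2 : ℤ) = bSeq k n) ∨
                ((p.1 : ℤ) = bSeq k n ∧ (p.2 : ℤ) = aSeq k n)}

/-!
Since `1/α + 1/β = 1`, Beatty's theorem writes the smaller coordinate `x` of a position as `a_n` or
`b_n`. A Nim move then suffices unless `x = a_n ≤ y < b_n`. In that case let `m < n` be such that
`b_m - a_m ≤ y - x < b_{m+1} - a_{m+1}`. The differences `b - a` grow by at most `k + 1` per step,
so either a diagonal move reaches `(a_m, b_m)`, or `y - x = b_{m+1} - a_{m+1} - 1`. In the latter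
case the moves to `(a_{m+1}, b_{m+1})` fail only if `n = m + 1`, that is for
`(x, y) = (a_n, b_n - 1)` with `b_n = n + k a_n + i` and `1 ≤ i < k`.

For that last position put `E(r, f) = k(rα - f) - i`. The relation `b_n = n + k a_n + i` says
`0 ≤ E(n, a_n) < 1`, and the recursion for `(f, g)` divides `E` by `β` at each step:
`E(g_j, f_{j+1}) = (kα - i) / β^{j+1}`. Running the recursion backwards from `(n, a_n)` multiplies
`E` by `β` and shrinks `r`, and it stops at a `j` with `0 ≤ E(g_j, f_{j+1}) ≤ E(n, a_n)`. By
linearity `N = n - g_j` and `A = a_n - f_{j+1}` satisfy `0 ≤ k(Nα - A) < 1`, hence `A = a_N` and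
`N + kA = b_N`, and the extra move `(f_{j+1}, g_{j+1} - 1)` leads to `(a_N, b_N)`.
-/

theorem not_isSquare_sq_add_four_mul {k : ℕ} (hk : 1 ≤ k) : ¬ IsSquare (k ^ 2 + 4 * k) := by
  rintro ⟨r, hr⟩
  have hlower : k + 1 < r := by nlinarith
  have hupper : r < k + 2 := by nlinarith
  omega

theorem exists_lt_le_lt_succ {X : Type*} [LinearOrder X] {u : ℕ → X} {z : X} {n : ℕ}
    (h0 : u 0 ≤ z) (hn : z < u n) : ∃ m < n, u m ≤ z ∧ z < u (m + 1) := by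
  induction n with
  | zero => exact absurd hn h0.not_gt
  | succ n ih =>
    rcases lt_or_ge z (u n) with h | h
    · obtain ⟨m, hm, hle, hlt⟩ := ih h
      exact ⟨m, hm.trans n.lt_succ_self, hle, hlt⟩
    · exact ⟨n, n.lt_succ_self, h, hn⟩

/-! ### The slopes `α` and `β` -/

theorem mul_alphaK_sq {k : ℕ} (hk : 1 ≤ k) : k * alphaK k ^ 2 = k * alphaK k + 1 := by
  have hk0 : (0 : ℝ) < k := by exact_mod_cast hk
  have hsqrt : (k : ℝ) * √(1 + 4 / k) ^ 2 = k + 4 := by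
    rw [Real.sq_sqrt (by positivity), mul_add, mul_one, mul_div_cancel₀ _ hk0.ne']
  unfold alphaK
  linear_combination hsqrt / 4

theorem one_lt_alphaK {k : ℕ} (hk : 1 ≤ k) : 1 < alphaK k := by
  have hk0 : (0 : ℝ) < k := by exact_mod_cast hk
  have hsqrt : 1 < √(1 + 4 / (k : ℝ)) := by
    rw [Real.lt_sqrt zero_le_one, one_pow, lt_add_iff_pos_right]
    exact div_pos four_pos hk0
  unfold alphaK
  linarith

theorem alphaK_pos {k : ℕ} (hk : 1 ≤ k) : 0 < alphaK k :=
  zero_lt_one.trans (one_lt_alphaK hk)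

theorem betaK_pos {k : ℕ} (hk : 1 ≤ k) : 0 < betaK k := by
  have := alphaK_pos hk
  unfold betaK
  positivity

theorem mul_alphaK_sub_one_lt_one {k : ℕ} (hk : 1 ≤ k) : k * (alphaK k - 1) < 1 := by
  have hk0 : (0 : ℝ) < k := by exact_mod_cast hk
  nlinarith [mul_alphaK_sq hk, mul_pos hk0 (sub_pos.2 (one_lt_alphaK hk))]

theorem irrational_alphaK {k : ℕ} (hk : 1 ≤ k) : Irrational (alphaK k) := by
  have hk0 : (0 : ℝ) < k := by exact_mod_cast hk
  have hsqrt : √((k ^ 2 + 4 * k : ℕ) : ℝ) = (k : ℝ) * (2 * alphaK k - 1) := by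
    rw [Real.sqrt_eq_iff_mul_self_eq_of_pos
      (mul_pos hk0 (by linarith [one_lt_alphaK hk]))]
    push_cast
    linear_combination 4 * (k : ℝ) * mul_alphaK_sq hk
  have hirr := irrational_sqrt_natCast_iff.2 (not_isSquare_sq_add_four_mul hk)
  rintro ⟨q, hq⟩
  exact hirr ⟨k * (2 * q - 1), by rw [hsqrt, ← hq]; push_cast; rfl⟩

theorem holderConjugate_alphaK_betaK {k : ℕ} (hk : 1 ≤ k) :
    (alphaK k).HolderConjugate (betaK k) := by
  refine Real.holderConjugate_iff.2 ⟨one_lt_alphaK hk, ?_⟩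
  have hα := alphaK_pos hk
  have hβ := betaK_pos hk
  field_simp
  unfold betaK
  linear_combination -mul_alphaK_sq hk

/-! ### The sequences `a` and `b` -/

theorem aSeq_zero (k : ℕ) : aSeq k 0 = 0 := by simp [aSeq]

theorem bSeq_zero (k : ℕ) : bSeq k 0 = 0 := by simp [bSeq]

theorem aSeq_nonneg (k n : ℕ) : 0 ≤ aSeq k n :=
  Int.floor_nonneg.2 (by unfold alphaK; positivity)

theorem bSeq_nonneg (k n : ℕ) : 0 ≤ bSeq k n :=
  Int.floor_nonneg.2 (by unfold betaK alphaK; positivity)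

theorem strictMono_aSeq {k : ℕ} (hk : 1 ≤ k) : StrictMono (aSeq k) := by
  refine strictMono_nat_of_lt_succ fun n ↦ Int.lt_iff_add_one_le.2 (Int.le_floor.2 ?_)
  have := Int.floor_le (n * alphaK k)
  have := one_lt_alphaK hk
  unfold aSeq
  push_cast
  linarith

theorem bSeq_succ_le {k : ℕ} (hk : 1 ≤ k) (n : ℕ) : bSeq k (n + 1) ≤ bSeq k n + (k + 2) := by
  refine Int.lt_add_one_iff.1 (Int.floor_lt.2 ?_)
  have := Int.lt_floor_add_one (n * betaK k)
  have hβ : betaK k < k + 2 := by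
    unfold betaK
    linarith [mul_alphaK_sub_one_lt_one hk]
  unfold bSeq
  push_cast
  linarith

theorem add_mul_aSeq_le_bSeq (k n : ℕ) : n + k * aSeq k n ≤ bSeq k n := by
  refine Int.le_floor.2 ?_
  have := mul_le_mul_of_nonneg_left (Int.floor_le (n * alphaK k)) k.cast_nonneg
  unfold aSeq betaK
  push_cast
  linarith

theorem bSeq_lt_add_mul_aSeq_add {k : ℕ} (hk : 1 ≤ k) (n : ℕ) :
    bSeq k n < n + k * aSeq k n + k := by
  have hk0 : (0 : ℝ) < k := by exact_mod_cast hk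
  refine Int.floor_lt.2 ?_
  have := mul_lt_mul_of_pos_left (Int.lt_floor_add_one (n * alphaK k)) hk0
  unfold aSeq betaK
  push_cast
  linarith

theorem aSeq_le_bSeq {k : ℕ} (hk : 1 ≤ k) (n : ℕ) : aSeq k n ≤ bSeq k n := by
  have hk1 : (1 : ℤ) ≤ k := by exact_mod_cast hk
  have := le_mul_of_one_le_left (aSeq_nonneg k n) hk1
  linarith [add_mul_aSeq_le_bSeq k n]

theorem add_mul_aSeq_succ_lt_bSeq_succ {k n : ℕ} (ha : aSeq k (n + 1) = aSeq k n + 1)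
    (hb : bSeq k (n + 1) = bSeq k n + (k + 2)) :
    ((n + 1 : ℕ) : ℤ) + k * aSeq k (n + 1) < bSeq k (n + 1) := by
  rw [ha, hb]
  push_cast
  linarith [add_mul_aSeq_le_bSeq k n]

theorem exists_eq_aSeq_or_eq_bSeq {k : ℕ} (hk : 1 ≤ k) (x : ℕ) :
    ∃ n : ℕ, (x : ℤ) = aSeq k n ∨ (x : ℤ) = bSeq k n := by
  rcases x.eq_zero_or_pos with rfl | hx
  · exact ⟨0, Or.inl (by simp [aSeq_zero])⟩
  have hmem : (x : ℤ) ∈ {m : ℤ | 0 < m} := Int.natCast_pos.2 hx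
  rw [← (irrational_alphaK hk).beattySeq_symmDiff_beattySeq_pos
    (holderConjugate_alphaK_betaK hk)] at hmem
  rcases hmem with ⟨⟨m, hm, hmx⟩, -⟩ | ⟨⟨m, hm, hmx⟩, -⟩
  all_goals lift m to ℕ using hm.le
  · exact ⟨m, Or.inl (by simpa [aSeq, beattySeq] using hmx.symm)⟩
  · exact ⟨m, Or.inr (by simpa [bSeq, beattySeq] using hmx.symm)⟩

/-! ### Descent along the sequences `f` and `g` -/

/-- The affine form `E(r, f) = k(rα - f) - i`, that is `rβ - (r + kf + i)`. It measures by how much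
`rβ` exceeds a candidate value `r + kf + i` for `b_r`. -/
noncomputable def excess (k i : ℕ) (r f : ℤ) : ℝ := k * (r * alphaK k - f) - i

theorem bSeq_eq_iff_excess {k i n : ℕ} {f : ℤ} :
    bSeq k n = n + k * f + i ↔ 0 ≤ excess k i n f ∧ excess k i n f < 1 := by
  rw [bSeq, Int.floor_eq_iff]
  unfold excess betaK
  push_cast
  constructor <;> rintro ⟨hle, hlt⟩ <;> constructor <;> linarith

theorem aSeq_eq_of_excess {k n : ℕ} {f : ℤ} (hk : 1 ≤ k) (h0 : 0 ≤ excess k 0 n f)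
    (h1 : excess k 0 n f < 1) : aSeq k n = f := by
  have hk1 : (1 : ℝ) ≤ k := by exact_mod_cast hk
  simp only [excess, Nat.cast_zero, sub_zero, Int.cast_natCast] at h0 h1
  have hle : 0 ≤ n * alphaK k - f := nonneg_of_mul_nonneg_right h0 (by linarith)
  have hlt := (le_mul_of_one_le_left hle hk1).trans_lt h1
  exact Int.floor_eq_iff.2 ⟨by linarith, by linarith⟩

theorem excess_sub_excess (k i : ℕ) (r f r' f' : ℤ) :
    excess k i r f - excess k i r' f' = excess k 0 (r - r') (f - f') := by
  unfold excess
  push_cast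
  ring

-- `(r, f) ↦ (r - k(f - r) - i, f - r)` undoes the step from `(g_j, f_{j+1})` to
-- `(g_{j+1}, f_{j+2})`.
theorem betaK_mul_excess {k : ℕ} (hk : 1 ≤ k) (i : ℕ) (r f : ℤ) :
    betaK k * excess k i r f = excess k i (r - k * (f - r) - i) (f - r) := by
  unfold betaK excess
  push_cast
  linear_combination (k : ℝ) * r * mul_alphaK_sq hk

theorem betaK_mul_excess_succ_self {k : ℕ} (hk : 1 ≤ k) (i : ℕ) :
    betaK k * excess k i (i + 1) (i + 1) = k * alphaK k - i := by
  rw [betaK_mul_excess hk, excess]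
  push_cast
  ring

theorem betaK_mul_excess_fg_succ {k : ℕ} (hk : 1 ≤ k) (i j : ℕ) :
    betaK k * excess k i (fg k i (j + 1)).2 (fg k i (j + 2)).1 =
      excess k i (fg k i j).2 (fg k i (j + 1)).1 := by
  rw [betaK_mul_excess hk]
  simp only [fg]
  push_cast
  congr 1 <;> ring

theorem excess_fg_nonneg {k i : ℕ} (hk : 1 ≤ k) (hi : i ≤ k) (j : ℕ) :
    0 ≤ excess k i (fg k i j).2 (fg k i (j + 1)).1 := by
  have hβ := betaK_pos hk
  induction j with
  | zero =>
    have hik : (i : ℝ) ≤ k := by exact_mod_cast hi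
    have hα := le_mul_of_one_le_right (k.cast_nonneg : (0 : ℝ) ≤ k) (one_lt_alphaK hk).le
    refine nonneg_of_mul_nonneg_right ?_ hβ
    simp only [fg, zero_add, Nat.cast_add, Nat.cast_one, betaK_mul_excess_succ_self hk]
    linarith
  | succ j ih =>
    exact nonneg_of_mul_nonneg_right (ih.trans_eq (betaK_mul_excess_fg_succ hk i j).symm) hβ

theorem pos_of_excess_nonneg {k i : ℕ} {r f : ℤ} (hk : 1 ≤ k) (hi : 1 ≤ i) (hf : 0 ≤ f)
    (h : 0 ≤ excess k i r f) : 0 < r := by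
  have hk0 : (0 : ℝ) < k := by exact_mod_cast hk
  have hi0 : (0 : ℝ) < i := by exact_mod_cast hi
  have hf0 : (0 : ℝ) ≤ f := by exact_mod_cast hf
  unfold excess at h
  have hdiff : 0 < r * alphaK k - f := pos_of_mul_pos_right (by linarith) hk0.le
  have hr : (0 : ℝ) < r := pos_of_mul_pos_left (by linarith) (alphaK_pos hk).le
  exact_mod_cast hr

theorem le_of_excess_lt {k i : ℕ} {r f : ℤ} (hk : 1 ≤ k) (hr : 0 < r)
    (h : excess k i r f < k * alphaK k - i) : r ≤ f := by
  have hk0 : (0 : ℝ) < k := by exact_mod_cast hk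
  have hr1 : (0 : ℝ) ≤ r - 1 := by
    rw [sub_nonneg]
    exact_mod_cast hr
  unfold excess at h
  have hlt : (r - 1) * alphaK k < f := lt_of_mul_lt_mul_left (by linarith) hk0.le
  have hlt' : (r - 1 : ℝ) < f := (le_mul_of_one_le_right hr1 (one_lt_alphaK hk).le).trans_lt hlt
  exact Int.sub_one_lt_iff.1 (by exact_mod_cast hlt')

theorem lt_of_excess_nonneg {k i : ℕ} {r f : ℤ} (hk : 1 ≤ k) (hr : 0 < r) (hrf : r ≤ f)
    (h : 0 ≤ excess k i r f) : i < r := by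
  have hr0 : (0 : ℝ) < r := by exact_mod_cast hr
  have hrf' : (k * r : ℝ) ≤ k * f := by gcongr
  unfold excess at h
  have : (i : ℝ) < r := calc
    (i : ℝ) ≤ r * (k * (alphaK k - 1)) := by linarith
    _ < r := mul_lt_of_lt_one_right hr0 (mul_alphaK_sub_one_lt_one hk)
  exact_mod_cast this

theorem exists_excess_fg_le {k i : ℕ} {r f : ℤ} (hk : 1 ≤ k) (hi : 1 ≤ i) (hf : 0 ≤ f)
    (h0 : 0 ≤ excess k i r f) (h1 : excess k i r f < k * alphaK k - i) :
    ∃ j : ℕ, ((fg k i j).2 : ℤ) ≤ r ∧ ((fg k i (j + 1)).1 : ℤ) ≤ f ∧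
      excess k i (fg k i j).2 (fg k i (j + 1)).1 ≤ excess k i r f := by
  have hβ := betaK_pos hk
  have hr : 0 < r := pos_of_excess_nonneg hk hi hf h0
  have hrf : r ≤ f := le_of_excess_lt hk hr h1
  have hir : i < r := lt_of_excess_nonneg hk hr hrf h0
  rcases le_or_gt (excess k i (i + 1) (i + 1)) (excess k i r f) with hle | hlt
  · refine ⟨0, ?_, ?_, ?_⟩
    · simp only [fg]
      lia
    · simp only [fg]
      lia
    · simpa [fg] using hle
  · have h0' := mul_nonneg hβ.le h0
    have h1' := mul_lt_mul_of_pos_left hlt hβ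
    rw [betaK_mul_excess hk] at h0' h1'
    rw [betaK_mul_excess_succ_self hk] at h1'
    obtain ⟨j, hg, hf', hexc⟩ := exists_excess_fg_le hk hi (sub_nonneg.2 hrf) h0' h1'
    have hg' : ((fg k i (j + 1)).2 : ℤ) ≤ r := by
      have := mul_le_mul_of_nonneg_left hf' (k.cast_nonneg : (0 : ℤ) ≤ k)
      simp only [fg] at this ⊢
      push_cast at this ⊢
      linarith
    refine ⟨j + 1, hg', ?_, ?_⟩
    · rw [fg]
      push_cast
      linarith
    · rw [← betaK_mul_excess hk, ← betaK_mul_excess_fg_succ hk] at hexc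
      exact le_of_mul_le_mul_left hexc hβ
termination_by r.toNat
decreasing_by
  have : 0 ≤ k * (f - r) := mul_nonneg k.cast_nonneg (sub_nonneg.2 hrf)
  lia

theorem exists_aSeq_bSeq_eq_add_fg {k i n : ℕ} (hi : 1 ≤ i) (hik : i + 1 ≤ k)
    (hb : bSeq k n = n + k * aSeq k n + i) :
    ∃ N j : ℕ, aSeq k n = aSeq k N + (fg k i (j + 1)).1 ∧
      bSeq k n = bSeq k N + (fg k i (j + 1)).2 := by
  have hk : 1 ≤ k := by lia
  obtain ⟨h0, h1⟩ := bSeq_eq_iff_excess.1 hb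
  have hlt : excess k i n (aSeq k n) < k * alphaK k - i := by
    have hik' : (i + 1 : ℝ) ≤ k := by exact_mod_cast hik
    have := le_mul_of_one_le_right (k.cast_nonneg : (0 : ℝ) ≤ k) (one_lt_alphaK hk).le
    linarith
  obtain ⟨j, hg, -, hexc⟩ := exists_excess_fg_le hk hi (aSeq_nonneg k n) h0 hlt
  obtain ⟨N, hN⟩ := Int.eq_ofNat_of_zero_le (sub_nonneg.2 hg)
  have hsub := excess_sub_excess k i n (aSeq k n) (fg k i j).2 (fg k i (j + 1)).1
  rw [hN] at hsub
  have h0' : 0 ≤ excess k 0 N (aSeq k n - (fg k i (j + 1)).1) := by linarith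
  have h1' : excess k 0 N (aSeq k n - (fg k i (j + 1)).1) < 1 := by
    linarith [excess_fg_nonneg hk (Nat.le_of_succ_le hik) j]
  refine ⟨N, j, ?_, ?_⟩
  · linarith [aSeq_eq_of_excess hk h0' h1']
  · rw [bSeq_eq_iff_excess.2 ⟨h0', h1'⟩, hb]
    simp only [fg] at hN ⊢
    push_cast at hN ⊢
    linarith

/-! ### Winning moves -/

/-- The position `p` has a `Γ_k`-move into `S̄_k`, which plays the role of the set of
P-positions. -/
def HasWinningMove (k : ℕ) (p : ℕ × ℕ) : Prop := ∃ q, GammaMove k p q ∧ q ∈ SbarK k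

theorem swap_mem_SbarK_iff {k : ℕ} {p : ℕ × ℕ} : p.swap ∈ SbarK k ↔ p ∈ SbarK k :=
  exists_congr fun _ ↦ by simp only [Prod.fst_swap, Prod.snd_swap, and_comm, or_comm]

theorem GammaMove.swap {k : ℕ} {p q : ℕ × ℕ} (hpq : GammaMove k p q) :
    GammaMove k p.swap q.swap :=
  hpq.imp (fun ⟨n, hn, h⟩ ↦ ⟨n, hn, h.symm.imp And.symm And.symm⟩) <| Or.imp
    (fun ⟨s, t, hs, ht, hst, hts, h⟩ ↦ ⟨s, t, hs, ht, hst, hts, h.symm.imp And.symm And.symm⟩)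
    (fun ⟨i, n, hi, hik, hn, h⟩ ↦ ⟨i, n, hi, hik, hn, h.symm.imp And.symm And.symm⟩)

theorem HasWinningMove.swap {k : ℕ} {p : ℕ × ℕ} : HasWinningMove k p → HasWinningMove k p.swap :=
  fun ⟨q, hmove, hq⟩ ↦ ⟨q.swap, hmove.swap, swap_mem_SbarK_iff.2 hq⟩

theorem hasWinningMove_of_gammaMove {k n : ℕ} {p : ℕ × ℕ}
    (h : GammaMove k p ((aSeq k n).toNat, (bSeq k n).toNat)) : HasWinningMove k p :=
  ⟨_, h, n, Or.inl ⟨Int.toNat_of_nonneg (aSeq_nonneg k n), Int.toNat_of_nonneg (bSeq_nonneg k n)⟩⟩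

theorem hasWinningMove_of_bSeq_lt {k n x y : ℕ} (hx : (x : ℤ) = aSeq k n) (hy : bSeq k n < y) :
    HasWinningMove k (x, y) := by
  have hb := bSeq_nonneg k n
  exact hasWinningMove_of_gammaMove (n := n) <|
    Or.inl ⟨y - (bSeq k n).toNat, by lia, Or.inr ⟨by lia, by lia⟩⟩

theorem hasWinningMove_of_aSeq_lt {k n x y : ℕ} (hx : aSeq k n < x) (hy : (y : ℤ) = bSeq k n) :
    HasWinningMove k (x, y) := by
  have ha := aSeq_nonneg k n
  exact hasWinningMove_of_gammaMove (n := n) <|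
    Or.inl ⟨x - (aSeq k n).toNat, by lia, Or.inl ⟨by lia, by lia⟩⟩

theorem hasWinningMove_of_abs_lt {k n x y : ℕ} (hx : aSeq k n < x) (hy : bSeq k n < y)
    (h : |(x - aSeq k n) - (y - bSeq k n)| < k) : HasWinningMove k (x, y) := by
  have ha := aSeq_nonneg k n
  have hb := bSeq_nonneg k n
  obtain ⟨hlower, hupper⟩ := abs_lt.1 h
  exact hasWinningMove_of_gammaMove (n := n) <| Or.inr <| Or.inl
    ⟨x - (aSeq k n).toNat, y - (bSeq k n).toNat, by lia, by lia, by lia, by lia,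
      Or.inl ⟨by lia, by lia⟩⟩

theorem hasWinningMove_of_eq_add_fg {k i n j x y : ℕ} (hi : 1 ≤ i) (hik : i + 1 ≤ k)
    (hx : (x : ℤ) = aSeq k n + (fg k i (j + 1)).1)
    (hy : (y + 1 : ℤ) = bSeq k n + (fg k i (j + 1)).2) : HasWinningMove k (x, y) := by
  have ha := aSeq_nonneg k n
  have hb := bSeq_nonneg k n
  have hg : 1 ≤ (fg k i (j + 1)).2 := by
    rw [fg]
    lia
  exact hasWinningMove_of_gammaMove (n := n) <| Or.inr <| Or.inr
    ⟨i, j + 1, hi, hik, by lia, Or.inl ⟨by lia, by lia⟩⟩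

theorem hasWinningMove_of_add_one_eq_bSeq {k n x y : ℕ} (hk : 1 ≤ k)
    (hlt : n + k * aSeq k n < bSeq k n) (hx : (x : ℤ) = aSeq k n)
    (hy : (y + 1 : ℤ) = bSeq k n) : HasWinningMove k (x, y) := by
  obtain ⟨i, hb⟩ := Int.le.dest hlt.le
  have hupper := bSeq_lt_add_mul_aSeq_add hk n
  have hi : 1 ≤ i := by lia
  have hik : i + 1 ≤ k := by lia
  obtain ⟨N, j, hN, hbN⟩ := exists_aSeq_bSeq_eq_add_fg hi hik hb.symm
  exact hasWinningMove_of_eq_add_fg hi hik (hx.trans hN) (hy.trans hbN)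

theorem hasWinningMove_of_lt_bSeq {k n x y : ℕ} (hk : 1 ≤ k) (hxy : x ≤ y)
    (hx : (x : ℤ) = aSeq k n) (hy : y < bSeq k n) : HasWinningMove k (x, y) := by
  obtain ⟨m, hmn, hle, hlt⟩ := exists_lt_le_lt_succ
    (u := fun m ↦ bSeq k m - aSeq k m) (z := (y - x : ℤ)) (n := n)
    (by simpa [aSeq_zero, bSeq_zero] using hxy) (by lia)
  have ham : aSeq k m < aSeq k n := strictMono_aSeq hk hmn
  rcases lt_or_ge (y - x : ℤ) (bSeq k m - aSeq k m + k) with hnear | hfar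
  · exact hasWinningMove_of_abs_lt (n := m) (by lia) (by lia) (abs_lt.2 ⟨by lia, by lia⟩)
  have ha_step : aSeq k m < aSeq k (m + 1) := strictMono_aSeq hk m.lt_succ_self
  have hb_step := bSeq_succ_le hk m
  have ha_succ : aSeq k (m + 1) = aSeq k m + 1 := by lia
  have hb_succ : bSeq k (m + 1) = bSeq k m + (k + 2) := by lia
  have hgap := add_mul_aSeq_succ_lt_bSeq_succ ha_succ hb_succ
  obtain hmn' | rfl : m + 1 < n ∨ m + 1 = n := Nat.lt_or_eq_of_le hmn
  · have hk2 : 2 ≤ k := by linarith [bSeq_lt_add_mul_aSeq_add hk (m + 1)]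
    have ham' : aSeq k (m + 1) < aSeq k n := strictMono_aSeq hk hmn'
    rcases eq_or_lt_of_le (show bSeq k (m + 1) ≤ y by lia) with hbm | hbm
    · exact hasWinningMove_of_aSeq_lt (n := m + 1) (by lia) hbm.symm
    · exact hasWinningMove_of_abs_lt (n := m + 1) (by lia) hbm (abs_lt.2 ⟨by lia, by lia⟩)
  · exact hasWinningMove_of_add_one_eq_bSeq hk hgap hx (by lia)

/-- From every position not in S̄_k there is a legal Γ_k-move
    to some position in S̄_k. -/
theorem move_N_to_P (k : ℕ) (hk : 1 ≤ k) (p : ℕ × ℕ) (hp : p ∉ SbarK k) :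
    ∃ q : ℕ × ℕ, GammaMove k p q ∧ q ∈ SbarK k := by
  wlog hxy : p.1 ≤ p.2 generalizing p
  · exact HasWinningMove.swap (this p.swap (mt swap_mem_SbarK_iff.1 hp) (le_of_not_ge hxy))
  obtain ⟨x, y⟩ := p
  obtain ⟨n, hx | hx⟩ := exists_eq_aSeq_or_eq_bSeq hk x
  · have hy : (y : ℤ) ≠ bSeq k n := fun hy ↦ hp ⟨n, Or.inl ⟨hx, hy⟩⟩
    rcases hy.lt_or_gt with hlt | hgt
    · exact hasWinningMove_of_lt_bSeq hk hxy hx hlt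
    · exact hasWinningMove_of_bSeq_lt hx hgt
  · have hy : aSeq k n ≠ y := fun hy ↦ hp ⟨n, Or.inr ⟨hx, hy.symm⟩⟩
    have hle : aSeq k n ≤ y := (aSeq_le_bSeq hk n).trans (hx ▸ Int.ofNat_le.2 hxy)
    exact (hasWinningMove_of_aSeq_lt (lt_of_le_of_ne hle hy) hx).swap
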